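/- H-Theorem for the hard-sphere Boltzmann equation: Let f ∈ C¹([0,T]×ℝ³×ℝ³) be strictly positive and solve the hard-sphere Boltzmann equation ∂_t f + v·∇_x f = Q(f,f) pointwise. Assume there are constants 0 < c₁ ≤ c₂ and 0 < β₂ ≤ β₁ such that c₁ e^{-β₁(|x|²+|v|²)} ≤ f(t,x,v) ≤ c₂ e^{-β₂(|x|²+|v|²)} and |∂_t f| + |∇_x f| + |∇_v f| ≤ c₂ e^{-β₂(|x|²+|v|²)} for all (t,x,v) ∈ [0,T]×ℝ³×ℝ³. Then the H-functional H(f(t)) := ∫_{ℝ³×ℝ³} f(t,x,v)[log f(t,x,v) − 1] dx dv is well defined and nonincreasing on [0,T]; in particular H(f(t)) ≤ H(f(0)) for all 0 ≤ t ≤ T. -/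

import Mathlib

open MeasureTheory Real Metric
open scoped ENNReal RealInnerProductSpace

noncomputable section

/-- Three-dimensional Euclidean space. -/
abbrev V3 := EuclideanSpace ℝ (Fin 3)

/-- The `j`-particle phase space `(ℝ³ × ℝ³)^j`. -/
abbrev Phase (j : ℕ) := Fin j → V3 × V3

/-- The surface measure on the unit sphere `S² ⊂ ℝ³`. -/
def sphereMeasure : Measure (sphere (0 : V3) 1) := (volume : Measure V3).toSphere

/-- The gain part `C⁺_{k,j+1}` of the Boltzmann hierarchy collision operator. -/
def collGain (j : ℕ) (k : Fin j) (g : Phase (j + 1) → ℝ) (z : Phase j) : ℝ :=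
  ∫ ω : sphere (0 : V3) 1, ∫ v : V3,
    (if 0 ≤ ⟪(ω : V3), (z k).2 - v⟫ then
      ⟪(ω : V3), (z k).2 - v⟫ *
        g (Fin.snoc
            (Function.update z k
              ((z k).1, (z k).2 - ⟪(z k).2 - v, (ω : V3)⟫ • (ω : V3)))
            ((z k).1, v + ⟪(z k).2 - v, (ω : V3)⟫ • (ω : V3)))
    else 0) ∂volume ∂sphereMeasure

/-- The loss part `C⁻_{k,j+1}` of the Boltzmann hierarchy collision operator. -/
def collLoss (j : ℕ) (k : Fin j) (g : Phase (j + 1) → ℝ) (z : Phase j) : ℝ :=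
  ∫ ω : sphere (0 : V3) 1, ∫ v : V3,
    (if 0 ≤ ⟪(ω : V3), (z k).2 - v⟫ then
      ⟪(ω : V3), (z k).2 - v⟫ * g (Fin.snoc z ((z k).1, v))
    else 0) ∂volume ∂sphereMeasure

/-- The Boltzmann hierarchy collision operator `C_{j+1} = Σ_k (C⁺_{k,j+1} − C⁻_{k,j+1})`. -/
def collB (j : ℕ) (g : Phase (j + 1) → ℝ) : Phase j → ℝ :=
  fun z => ∑ k : Fin j, (collGain j k g z - collLoss j k g z)

/-- The hard-sphere Boltzmann collision operator `Q(f,f)`. -/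
def QHS (f : ℝ × V3 × V3 → ℝ) (t : ℝ) (x v : V3) : ℝ :=
  ∫ ν : sphere (0 : V3) 1, ∫ vs : V3,
    (if 0 ≤ ⟪(ν : V3), v - vs⟫ then
      ⟪(ν : V3), v - vs⟫ *
        (f (t, x, v - ⟪v - vs, (ν : V3)⟫ • (ν : V3)) *
            f (t, x, vs + ⟪v - vs, (ν : V3)⟫ • (ν : V3)) -
          f (t, x, v) * f (t, x, vs))
    else 0) ∂volume ∂sphereMeasure

/-! Free streaming `(x, v) ↦ (x + tv, v)` preserves `dx dv`, so
`H(f(t)) = ∫ η(f(t, x + tv, v)) dx dv` with `η(y) = y (log y - 1)` and `η' = log`. Along the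
streaming lines the Boltzmann equation reads `d/dt f(t, x + tv, v) = Q(f,f)(t, x + tv, v)`, and
differentiating under the integral sign gives `dH/dt = ∫ Q(f,f) log f dx dv`. The domination comes
from the Gaussian bounds: they control `Q(f,f) log f`, and `|x|² + |v|² ≤ 2(1 + t²)(|x+tv|² + |v|²)`
shows that a Gaussian in `(x + tv, v)` is dominated by one in `(x, v)`.

For fixed `t` and `x`, write `φ = f(t, x, ·)`. The measure `dν dv dv∗` is invariant under the
exchange `(ν, v, v∗) ↦ (-ν, v∗, v)` and the reversal `(ν, v, v∗) ↦ (-ν, v', v∗')`; the integrand of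
`Q(φ,φ)` is symmetric under the first and antisymmetric under the second. Symmetrising,
`∫ Q(φ,φ) log φ dv = -¼ ∫ (ν·(v-v∗))₊ (A - B)(log A - log B) dν dv dv∗ ≤ 0`,
where `A = φ(v')φ(v∗')` and `B = φ(v)φ(v∗)`.
-/

section LogAndExp

theorem sub_mul_log_sub_log_nonneg {x y : ℝ} (hx : 0 < x) (hy : 0 < y) :
    0 ≤ (x - y) * (log x - log y) := by
  rcases le_total x y with h | h
  · exact mul_nonneg_of_nonpos_of_nonpos (sub_nonpos.2 h) (sub_nonpos.2 (log_le_log hx h))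
  · exact mul_nonneg (sub_nonneg.2 h) (sub_nonneg.2 (log_le_log hy h))

theorem abs_log_le_of_exp_bounds {a b c β r y : ℝ} (ha : 0 < a) (hr : 0 ≤ r)
    (hlow : a * exp (-b * r) ≤ y) (hup : y ≤ c * exp (-β * r)) :
    |log y| ≤ (|log a| + |log c| + |b| + |β|) * (1 + r) := by
  have hy : 0 < y := hlow.trans_lt' (by positivity)
  have hc : 0 < c := pos_of_mul_pos_left (hy.trans_le hup) (exp_pos _).le
  have log_ge : log a - b * r ≤ log y := by
    have := log_le_log (by positivity) hlow
    rw [log_mul ha.ne' (exp_ne_zero _), log_exp] at this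
    linarith
  have log_le : log y ≤ log c - β * r := by
    have := log_le_log hy hup
    rw [log_mul hc.ne' (exp_ne_zero _), log_exp] at this
    linarith
  have hb : b * r ≤ |b| * r := by gcongr; exact le_abs_self b
  have hβ : -β * r ≤ |β| * r := by gcongr; exact neg_le_abs β
  have cross : 0 ≤ (|log a| + |log c|) * r + (|b| + |β|) := by positivity
  have hbr : 0 ≤ |b| * r := by positivity
  have hβr : 0 ≤ |β| * r := by positivity
  rw [abs_le]
  constructor <;> linarith [neg_abs_le (log a), le_abs_self (log c), abs_nonneg (log a),
    abs_nonneg (log c)]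

theorem exists_one_add_pow_mul_exp_neg_le (k : ℕ) {β γ : ℝ} (h : γ < β) :
    ∃ M, 0 ≤ M ∧ ∀ r, 0 ≤ r → (1 + r) ^ k * exp (-β * r) ≤ M * exp (-γ * r) := by
  have hδ : 0 < β - γ := sub_pos.2 h
  refine ⟨k.factorial / (β - γ) ^ k * exp (β - γ), by positivity, fun r hr ↦ ?_⟩
  have pow_le : (1 + r) ^ k ≤ k.factorial / (β - γ) ^ k * exp ((β - γ) * (1 + r)) := by
    have := pow_div_factorial_le_exp ((β - γ) * (1 + r)) (by positivity) k
    rw [mul_pow, div_le_iff₀ (by positivity)] at this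
    rw [div_mul_eq_mul_div, le_div_iff₀ (pow_pos hδ k)]
    linarith
  calc (1 + r) ^ k * exp (-β * r)
      ≤ k.factorial / (β - γ) ^ k * exp ((β - γ) * (1 + r)) * exp (-β * r) := by gcongr
    _ = k.factorial / (β - γ) ^ k * exp (β - γ) * exp (-γ * r) := by
        rw [mul_assoc, mul_assoc, ← exp_add, ← exp_add]
        ring_nf

end LogAndExp

section MeasurePreserving

variable {F : Type*} [NormedAddCommGroup F] [NormedSpace ℝ F] [MeasurableSpace F] [BorelSpace F]

theorem measurePreserving_linearMap_of_involutive [FiniteDimensional ℝ F] (μ : Measure F)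
    [μ.IsAddHaarMeasure] {A : F →ₗ[ℝ] F} (hA : Function.Involutive A) :
    MeasurePreserving A μ μ := by
  have det_mul_det : LinearMap.det A * LinearMap.det A = 1 := by
    rw [← map_mul, show A * A = 1 from LinearMap.ext hA, map_one]
  have abs_det : |LinearMap.det A| = 1 := by
    rcases mul_self_eq_one_iff.1 det_mul_det with h | h <;> simp [h]
  refine ⟨A.continuous_of_finiteDimensional.measurable, ?_⟩
  rw [Measure.map_linearMap_addHaar_eq_smul_addHaar μ (left_ne_zero_of_mul_eq_one det_mul_det),
    abs_inv, abs_det]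
  simp

theorem measurePreserving_neg_toSphere (μ : Measure F) [μ.IsNegInvariant] :
    MeasurePreserving (fun ν : sphere (0 : F) 1 ↦ -ν) μ.toSphere μ.toSphere := by
  refine ⟨continuous_neg.measurable, Measure.ext fun s hs ↦ ?_⟩
  have coe_preimage : ((↑) '' ((fun ν : sphere (0 : F) 1 ↦ -ν) ⁻¹' s) : Set F) = -((↑) '' s) := by
    ext x
    constructor
    · rintro ⟨ν, hν, rfl⟩
      exact ⟨-ν, hν, rfl⟩
    · rintro ⟨ν, hν, hx⟩
      exact ⟨-ν, by simpa using hν, by simp [hx]⟩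
  rw [Measure.map_apply continuous_neg.measurable hs, μ.toSphere_apply' hs,
    μ.toSphere_apply' (continuous_neg.measurable hs), coe_preimage, Set.smul_neg,
    Measure.measure_neg]

end MeasurePreserving

variable {E : Type*} [NormedAddCommGroup E]

/-- The energy `|x|² + |v|²` of a pair of vectors. Both the weight `e^{-β(|x|²+|v|²)}` on phase
space and the kinetic energy of two colliding particles are expressed through it. -/
def energy (p : E × E) : ℝ := ‖p.1‖ ^ 2 + ‖p.2‖ ^ 2

theorem energy_nonneg (p : E × E) : 0 ≤ energy p := by
  unfold energy
  positivity

theorem one_add_energy_le (p : E × E) : 1 + energy p ≤ (1 + ‖p.1‖ ^ 2) * (1 + ‖p.2‖ ^ 2) := by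
  unfold energy
  linarith [mul_nonneg (sq_nonneg ‖p.1‖) (sq_nonneg ‖p.2‖)]

theorem norm_sub_le_one_add_energy (p : E × E) : ‖p.1 - p.2‖ ≤ 1 + energy p := by
  unfold energy
  nlinarith [norm_sub_le p.1 p.2, sq_nonneg (‖p.1‖ - 1), sq_nonneg (‖p.2‖ - 1)]

theorem exp_mul_energy (κ : ℝ) (p : E × E) :
    exp (κ * energy p) = exp (κ * ‖p.1‖ ^ 2) * exp (κ * ‖p.2‖ ^ 2) := by
  rw [energy, mul_add, exp_add]

section GaussianBounds

/-- The density `y (log y - 1)` of the `H`-functional, an antiderivative of `log`. -/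
def hDensity (y : ℝ) : ℝ := y * (log y - 1)

theorem hDensity_eq_mul_log_sub : hDensity = fun y ↦ y * log y - y := by
  ext
  rw [hDensity, mul_sub, mul_one]

theorem continuous_hDensity : Continuous hDensity := by
  rw [hDensity_eq_mul_log_sub]
  exact continuous_mul_log.sub continuous_id

theorem hasDerivAt_hDensity {y : ℝ} (hy : y ≠ 0) : HasDerivAt hDensity (log y) y := by
  rw [hDensity_eq_mul_log_sub]
  exact ((hasDerivAt_mul_log hy).sub (hasDerivAt_id y)).congr_deriv (add_sub_cancel_right _ _)

/-- The two-sided Gaussian bounds `a e^{-b(|x|²+|v|²)} ≤ g(x,v) ≤ c e^{-β(|x|²+|v|²)}`. -/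
structure HasGaussianBounds (a b c β : ℝ) (g : E × E → ℝ) : Prop where
  lower : ∀ p, a * exp (-b * energy p) ≤ g p
  upper : ∀ p, g p ≤ c * exp (-β * energy p)

variable {a b c β : ℝ} {g : E × E → ℝ}

namespace HasGaussianBounds

theorem pos (hg : HasGaussianBounds a b c β g) (ha : 0 < a) (p : E × E) : 0 < g p :=
  (hg.lower p).trans_lt' (by positivity)

theorem const_pos (hg : HasGaussianBounds a b c β g) (ha : 0 < a) : 0 < c :=
  pos_of_mul_pos_left ((hg.pos ha 0).trans_le (hg.upper 0)) (exp_pos _).le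

theorem abs_log_le (hg : HasGaussianBounds a b c β g) (ha : 0 < a) (p : E × E) :
    |log (g p)| ≤ (|log a| + |log c| + |b| + |β|) * (1 + energy p) :=
  abs_log_le_of_exp_bounds ha (energy_nonneg p) (hg.lower p) (hg.upper p)

end HasGaussianBounds

theorem exists_abs_hDensity_le (ha : 0 < a) (hβ : 0 < β) :
    ∃ C, ∀ g : E × E → ℝ, HasGaussianBounds a b c β g →
      ∀ p, |hDensity (g p)| ≤ C * exp (-(β / 2) * energy p) := by
  obtain ⟨M, -, hM⟩ := exists_one_add_pow_mul_exp_neg_le 1 (half_lt_self hβ)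
  let L := |log a| + |log c| + |b| + |β|
  refine ⟨c * (L + 1) * M, fun g hg p ↦ ?_⟩
  have hc := (hg.const_pos ha).le
  have he := energy_nonneg p
  have abs_log_sub_one_le : |log (g p) - 1| ≤ (L + 1) * (1 + energy p) := by
    calc |log (g p) - 1| ≤ |log (g p)| + |1| := abs_sub _ _
      _ ≤ L * (1 + energy p) + 1 := by
          rw [abs_one]
          gcongr
          exact hg.abs_log_le ha p
      _ ≤ (L + 1) * (1 + energy p) := by linarith
  calc |hDensity (g p)| = g p * |log (g p) - 1| := by
        rw [hDensity, abs_mul, abs_of_pos (hg.pos ha p)]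
    _ ≤ c * exp (-β * energy p) * ((L + 1) * (1 + energy p)) :=
        mul_le_mul (hg.upper p) abs_log_sub_one_le (abs_nonneg _) (by positivity)
    _ = c * (L + 1) * ((1 + energy p) ^ 1 * exp (-β * energy p)) := by ring
    _ ≤ c * (L + 1) * (M * exp (-(β / 2) * energy p)) :=
        mul_le_mul_of_nonneg_left (hM _ he) (by positivity)
    _ = c * (L + 1) * M * exp (-(β / 2) * energy p) := by ring

end GaussianBounds

/-- The exchange `(ν, v, v∗) ↦ (-ν, v∗, v)` of the two particles. -/
def exchange (q : sphere (0 : E) 1 × E × E) : sphere (0 : E) 1 × E × E := (-q.1, q.2.swap)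

theorem exchange_involutive : Function.Involutive (exchange : sphere (0 : E) 1 × E × E → _) :=
  fun q ↦ by simp [exchange]

variable [InnerProductSpace ℝ E]

section Collision

/-- The collision of two particles with incoming velocities `p = (v, v∗)` and impact direction `ν`:
its value is the pair `(v', v∗')` of outgoing velocities. -/
def collisionMap (ν : sphere (0 : E) 1) : E × E →ₗ[ℝ] E × E where
  toFun p := (p.1 - ⟪p.1 - p.2, (ν : E)⟫ • (ν : E), p.2 + ⟪p.1 - p.2, (ν : E)⟫ • (ν : E))
  map_add' p q := by
    ext <;> simp only [Prod.fst_add, Prod.snd_add, inner_sub_left, inner_add_left] <;> module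
  map_smul' r p := by
    ext <;> simp only [Prod.smul_fst, Prod.smul_snd, inner_sub_left, real_inner_smul_left,
      RingHom.id_apply] <;> module

theorem collisionMap_apply (ν : sphere (0 : E) 1) (p : E × E) :
    collisionMap ν p =
      (p.1 - ⟪p.1 - p.2, (ν : E)⟫ • (ν : E), p.2 + ⟪p.1 - p.2, (ν : E)⟫ • (ν : E)) :=
  rfl

theorem inner_collisionMap_sub (ν : sphere (0 : E) 1) (p : E × E) :
    ⟪(collisionMap ν p).1 - (collisionMap ν p).2, (ν : E)⟫ = -⟪p.1 - p.2, (ν : E)⟫ := by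
  have hν : ⟪(ν : E), (ν : E)⟫ = 1 := by simp
  simp only [collisionMap_apply, inner_sub_left, inner_add_left, real_inner_smul_left, hν]
  ring

theorem collisionMap_involutive (ν : sphere (0 : E) 1) : Function.Involutive (collisionMap ν) := by
  intro p
  rw [collisionMap_apply ν (collisionMap ν p), inner_collisionMap_sub, collisionMap_apply]
  simp

theorem collisionMap_neg (ν : sphere (0 : E) 1) (p : E × E) :
    collisionMap (-ν) p = collisionMap ν p := by
  simp [collisionMap_apply]

theorem collisionMap_swap (ν : sphere (0 : E) 1) (p : E × E) :
    collisionMap ν p.swap = (collisionMap ν p).swap := by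
  ext <;> simp only [collisionMap_apply, Prod.fst_swap, Prod.snd_swap, inner_sub_left] <;> module

theorem energy_collisionMap (ν : sphere (0 : E) 1) (p : E × E) :
    energy (collisionMap ν p) = energy p := by
  have hν : ‖(ν : E)‖ = 1 := by simp
  simp only [energy, collisionMap_apply, norm_add_sq_real, norm_sub_sq_real, inner_sub_left,
    real_inner_smul_right, norm_smul, hν, norm_eq_abs, mul_one, sq_abs]
  ring

theorem continuous_collisionMap :
    Continuous fun q : sphere (0 : E) 1 × E × E ↦ collisionMap q.1 q.2 := by
  simp only [collisionMap_apply]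
  fun_prop

/-- The integrand `(ν·(v-v∗))₊ [φ(v')φ(v∗') - φ(v)φ(v∗)]` of the hard-sphere collision operator at
`q = (ν, v, v∗)`. The positive part encodes the restriction to the half sphere `ν·(v-v∗) ≥ 0`. -/
def collisionIntegrand (φ : E → ℝ) (q : sphere (0 : E) 1 × E × E) : ℝ :=
  max 0 ⟪q.2.1 - q.2.2, (q.1 : E)⟫ *
    (φ (collisionMap q.1 q.2).1 * φ (collisionMap q.1 q.2).2 - φ q.2.1 * φ q.2.2)

theorem continuous_collisionIntegrand {φ : E → ℝ} (hφ : Continuous φ) :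
    Continuous (collisionIntegrand φ) := by
  have := continuous_collisionMap (E := E)
  unfold collisionIntegrand
  fun_prop

theorem abs_collisionIntegrand_le {φ : E → ℝ} {c β : ℝ} (hφ : ∀ v, 0 ≤ φ v)
    (hup : ∀ v, φ v ≤ c * exp (-β * ‖v‖ ^ 2)) (q : sphere (0 : E) 1 × E × E) :
    |collisionIntegrand φ q| ≤ c ^ 2 * ((1 + energy q.2) * exp (-β * energy q.2)) := by
  obtain ⟨ν, p⟩ := q
  have mul_le (p : E × E) : φ p.1 * φ p.2 ≤ c ^ 2 * exp (-β * energy p) := by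
    calc φ p.1 * φ p.2 ≤ (c * exp (-β * ‖p.1‖ ^ 2)) * (c * exp (-β * ‖p.2‖ ^ 2)) :=
          mul_le_mul (hup _) (hup _) (hφ _) ((hφ _).trans (hup _))
      _ = c ^ 2 * exp (-β * energy p) := by rw [exp_mul_energy]; ring
  have abs_gain_sub_loss_le : |φ (collisionMap ν p).1 * φ (collisionMap ν p).2 - φ p.1 * φ p.2| ≤
      c ^ 2 * exp (-β * energy p) := by
    refine abs_sub_le_of_nonneg_of_le (mul_nonneg (hφ _) (hφ _)) ?_
      (mul_nonneg (hφ _) (hφ _)) (mul_le p)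
    simpa only [energy_collisionMap] using mul_le (collisionMap ν p)
  have speed_le : |max 0 ⟪p.1 - p.2, (ν : E)⟫| ≤ 1 + energy p := by
    rw [abs_of_nonneg (le_max_left _ _)]
    refine max_le (by linarith [energy_nonneg p]) ?_
    calc ⟪p.1 - p.2, (ν : E)⟫ ≤ ‖p.1 - p.2‖ * ‖(ν : E)‖ := real_inner_le_norm _ _
      _ = ‖p.1 - p.2‖ := by simp
      _ ≤ 1 + energy p := norm_sub_le_one_add_energy p
  calc |collisionIntegrand φ (ν, p)|
      = |max 0 ⟪p.1 - p.2, (ν : E)⟫| *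
          |φ (collisionMap ν p).1 * φ (collisionMap ν p).2 - φ p.1 * φ p.2| := abs_mul _ _
    _ ≤ (1 + energy p) * (c ^ 2 * exp (-β * energy p)) :=
        mul_le_mul speed_le abs_gain_sub_loss_le (abs_nonneg _) ((abs_nonneg _).trans speed_le)
    _ = c ^ 2 * ((1 + energy p) * exp (-β * energy p)) := by ring

/-- The reversal `(ν, v, v∗) ↦ (-ν, v', v∗')` of a collision. -/
def reversal (q : sphere (0 : E) 1 × E × E) : sphere (0 : E) 1 × E × E :=
  (-q.1, collisionMap q.1 q.2)

theorem reversal_involutive : Function.Involutive (reversal : sphere (0 : E) 1 × E × E → _) :=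
  fun q ↦ by simp [reversal, collisionMap_neg, collisionMap_involutive q.1 q.2]

theorem collisionIntegrand_exchange (φ : E → ℝ) (q : sphere (0 : E) 1 × E × E) :
    collisionIntegrand φ (exchange q) = collisionIntegrand φ q := by
  have inner_eq : ⟪q.2.2 - q.2.1, -(q.1 : E)⟫ = ⟪q.2.1 - q.2.2, (q.1 : E)⟫ := by
    rw [inner_neg_right, ← inner_neg_left, neg_sub]
  simp only [collisionIntegrand, exchange, collisionMap_neg, collisionMap_swap, Prod.fst_swap,
    Prod.snd_swap, coe_neg_sphere, inner_eq]
  ring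

theorem collisionIntegrand_reversal (φ : E → ℝ) (q : sphere (0 : E) 1 × E × E) :
    collisionIntegrand φ (reversal q) = -collisionIntegrand φ q := by
  simp only [collisionIntegrand, reversal, collisionMap_neg, collisionMap_involutive q.1 q.2,
    coe_neg_sphere, inner_neg_right, inner_collisionMap_sub, neg_neg]
  ring

/-- The change `ψ(v') + ψ(v∗') - ψ(v) - ψ(v∗)` of the observable `ψ` in a collision
`q = (ν, v, v∗)`. -/
def collisionIncrement (ψ : E → ℝ) (q : sphere (0 : E) 1 × E × E) : ℝ :=
  ψ (collisionMap q.1 q.2).1 + ψ (collisionMap q.1 q.2).2 - ψ q.2.1 - ψ q.2.2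

theorem collisionIntegrand_mul_collisionIncrement_log_nonneg {φ : E → ℝ} (hφ : ∀ v, 0 < φ v)
    (q : sphere (0 : E) 1 × E × E) :
    0 ≤ collisionIntegrand φ q * collisionIncrement (fun v ↦ log (φ v)) q := by
  have log_mul_sub_log_mul : collisionIncrement (fun v ↦ log (φ v)) q =
      log (φ (collisionMap q.1 q.2).1 * φ (collisionMap q.1 q.2).2) - log (φ q.2.1 * φ q.2.2) := by
    rw [log_mul (hφ _).ne' (hφ _).ne', log_mul (hφ _).ne' (hφ _).ne', collisionIncrement]
    ring
  rw [log_mul_sub_log_mul, collisionIntegrand, mul_assoc]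
  refine mul_nonneg (le_max_left _ _) ?_
  exact sub_mul_log_sub_log_nonneg (mul_pos (hφ _) (hφ _)) (mul_pos (hφ _) (hφ _))

/-- The hard-sphere collision operator
`Q(φ,φ)(v) = ∫ dν ∫ dv∗ (ν·(v-v∗))₊ [φ(v')φ(v∗') - φ(v)φ(v∗)]`
in a Euclidean space of arbitrary dimension. -/
def collisionOperator [FiniteDimensional ℝ E] [MeasurableSpace E] [BorelSpace E] (φ : E → ℝ)
    (v : E) : ℝ :=
  ∫ ν, ∫ w, collisionIntegrand φ (ν, v, w) ∂volume ∂(volume : Measure E).toSphere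

/-- The measure `dν dv dv∗` on the set of collisions `(ν, v, v∗)`. -/
abbrev collisionMeasure (E : Type*) [NormedAddCommGroup E] [InnerProductSpace ℝ E]
    [FiniteDimensional ℝ E] [MeasurableSpace E] [BorelSpace E] :
    Measure (sphere (0 : E) 1 × E × E) :=
  (volume : Measure E).toSphere.prod volume

variable [FiniteDimensional ℝ E] [MeasurableSpace E] [BorelSpace E]

theorem integrable_exp_neg_mul_sq_norm {β : ℝ} (hβ : 0 < β) :
    Integrable fun v : E ↦ exp (-β * ‖v‖ ^ 2) := by
  have := GaussianFourier.integrable_cexp_neg_mul_sq_norm_add (V := E) (b := (β : ℂ))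
    (by simpa using hβ) 0 0
  refine this.re.congr (.of_forall fun v ↦ ?_)
  simp only [zero_mul, add_zero, RCLike.re_to_complex]
  rw [show (-(β : ℂ) * (‖v‖ : ℂ) ^ 2) = ((-β * ‖v‖ ^ 2 : ℝ) : ℂ) by push_cast; ring]
  exact Complex.exp_ofReal_re _

theorem integrable_exp_neg_mul_energy {β : ℝ} (hβ : 0 < β) :
    Integrable fun p : E × E ↦ exp (-β * energy p) := by
  simp only [exp_mul_energy]
  exact (integrable_exp_neg_mul_sq_norm hβ).mul_prod (integrable_exp_neg_mul_sq_norm hβ)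

theorem measurePreserving_exchange :
    MeasurePreserving exchange (collisionMeasure E) (collisionMeasure E) :=
  (measurePreserving_neg_toSphere volume).prod Measure.measurePreserving_swap

theorem measurePreserving_reversal :
    MeasurePreserving reversal (collisionMeasure E) (collisionMeasure E) :=
  (measurePreserving_neg_toSphere volume).skew_product continuous_collisionMap.measurable
    (.of_forall fun ν ↦ (measurePreserving_linearMap_of_involutive
      ((volume : Measure E).prod volume) (collisionMap_involutive ν)).map_eq)

theorem integral_comp_exchange (g : sphere (0 : E) 1 × E × E → ℝ) :
    ∫ q, g (exchange q) ∂collisionMeasure E = ∫ q, g q ∂collisionMeasure E :=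
  measurePreserving_exchange.integral_comp (MeasurableEquiv.ofInvolutive _ exchange_involutive
    measurePreserving_exchange.measurable).measurableEmbedding g

theorem integral_comp_reversal (g : sphere (0 : E) 1 × E × E → ℝ) :
    ∫ q, g (reversal q) ∂collisionMeasure E = ∫ q, g q ∂collisionMeasure E :=
  measurePreserving_reversal.integral_comp (MeasurableEquiv.ofInvolutive _ reversal_involutive
    measurePreserving_reversal.measurable).measurableEmbedding g

theorem integral_collisionOperator_mul {φ ψ : E → ℝ}
    (hint : Integrable (fun q ↦ collisionIntegrand φ q * ψ q.2.1) (collisionMeasure E)) :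
    ∫ v, collisionOperator φ v * ψ v =
      ∫ q, collisionIntegrand φ q * ψ q.2.1 ∂collisionMeasure E := by
  have hint_assoc := (measurePreserving_prodAssoc (volume : Measure E).toSphere
    (volume : Measure E) (volume : Measure E)).integrable_comp_of_integrable hint
  rw [integral_prod _ hint]
  calc ∫ v, collisionOperator φ v * ψ v
      = ∫ v, ∫ ν, ∫ w, collisionIntegrand φ (ν, v, w) * ψ v ∂volume
          ∂(volume : Measure E).toSphere := by
        simp only [collisionOperator, integral_mul_const]
    _ = ∫ ν, ∫ v, ∫ w, collisionIntegrand φ (ν, v, w) * ψ v ∂volume ∂volume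
          ∂(volume : Measure E).toSphere :=
        (integral_integral_swap hint_assoc.integral_prod_left).symm
    _ = ∫ ν, ∫ p : E × E, collisionIntegrand φ (ν, p) * ψ p.1 ∂volume
          ∂(volume : Measure E).toSphere := by
        refine integral_congr_ae ?_
        filter_upwards [hint.prod_right_ae] with ν hν using (integral_prod _ hν).symm

theorem integral_collisionOperator_mul_eq_collisionIncrement {φ ψ : E → ℝ}
    (hint : Integrable (fun q ↦ collisionIntegrand φ q * ψ q.2.1) (collisionMeasure E)) :
    ∫ v, collisionOperator φ v * ψ v =
      -(1 / 4) * ∫ q, collisionIntegrand φ q * collisionIncrement ψ q ∂collisionMeasure E := by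
  let g₁ (q : sphere (0 : E) 1 × E × E) := collisionIntegrand φ q * ψ q.2.1
  let g₂ (q : sphere (0 : E) 1 × E × E) := collisionIntegrand φ q * ψ q.2.2
  have g₁_exchange (q) : g₁ (exchange q) = g₂ q := by
    simp only [g₁, g₂, collisionIntegrand_exchange]; rfl
  have hint₂ : Integrable g₂ (collisionMeasure E) :=
    (measurePreserving_exchange.integrable_comp_of_integrable hint).congr (.of_forall g₁_exchange)
  have integral_g₂ : ∫ q, g₂ q ∂collisionMeasure E = ∫ q, g₁ q ∂collisionMeasure E := by
    rw [← integral_comp_exchange g₁, funext g₁_exchange]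
  have hint₁ : Integrable g₁ (collisionMeasure E) := hint
  have hint₁' : Integrable (fun q ↦ g₁ (reversal q)) (collisionMeasure E) :=
    measurePreserving_reversal.integrable_comp_of_integrable hint₁
  have hint₂' : Integrable (fun q ↦ g₂ (reversal q)) (collisionMeasure E) :=
    measurePreserving_reversal.integrable_comp_of_integrable hint₂
  have eq_sum (q) : collisionIntegrand φ q * collisionIncrement ψ q =
      -(g₁ (reversal q) + g₂ (reversal q) + g₁ q + g₂ q) := by
    simp only [g₁, g₂, collisionIntegrand_reversal]
    simp only [collisionIncrement, reversal]
    ring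
  have integral_sum : ∫ q, (g₁ (reversal q) + g₂ (reversal q) + g₁ q + g₂ q) ∂collisionMeasure E =
      4 * ∫ q, g₁ q ∂collisionMeasure E := by
    rw [integral_add ((hint₁'.fun_add hint₂').fun_add hint₁) hint₂,
      integral_add (hint₁'.fun_add hint₂') hint₁, integral_add hint₁' hint₂',
      integral_comp_reversal, integral_comp_reversal, integral_g₂]
    ring
  rw [integral_collisionOperator_mul hint, funext eq_sum, integral_neg, integral_sum]
  ring

theorem integral_collisionOperator_mul_log_nonpos {φ : E → ℝ} (hφ : ∀ v, 0 < φ v)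
    (hint : Integrable (fun q ↦ collisionIntegrand φ q * log (φ q.2.1)) (collisionMeasure E)) :
    ∫ v, collisionOperator φ v * log (φ v) ≤ 0 := by
  rw [integral_collisionOperator_mul_eq_collisionIncrement (ψ := fun v ↦ log (φ v)) hint]
  have : 0 ≤ ∫ q, collisionIntegrand φ q * collisionIncrement (fun v ↦ log (φ v)) q
      ∂collisionMeasure E :=
    integral_nonneg (collisionIntegrand_mul_collisionIncrement_log_nonneg hφ)
  linarith

theorem integrable_collisionIntegrand_mul {φ ψ : E → ℝ} {c β L : ℝ} (hβ : 0 < β)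
    (hφc : Continuous φ) (hφ : ∀ v, 0 ≤ φ v) (hup : ∀ v, φ v ≤ c * exp (-β * ‖v‖ ^ 2))
    (hψc : Continuous ψ) (hψ : ∀ v, |ψ v| ≤ L * (1 + ‖v‖ ^ 2)) :
    Integrable (fun q ↦ collisionIntegrand φ q * ψ q.2.1) (collisionMeasure E) := by
  obtain ⟨M, -, hM⟩ := exists_one_add_pow_mul_exp_neg_le 2 (half_lt_self hβ)
  have dominating := (integrable_const (μ := (volume : Measure E).toSphere)
    (c ^ 2 * L * M)).mul_prod (integrable_exp_neg_mul_energy (E := E) (half_pos hβ))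
  have hK := continuous_collisionIntegrand hφc
  refine dominating.mono' (by fun_prop) (.of_forall fun q ↦ ?_)
  have hL : 0 ≤ L := nonneg_of_mul_nonneg_left ((abs_nonneg _).trans (hψ 0)) (by positivity)
  have hψ_energy : |ψ q.2.1| ≤ L * (1 + energy q.2) :=
    (hψ _).trans (by unfold energy; gcongr; linarith [sq_nonneg ‖q.2.2‖])
  have he := energy_nonneg q.2
  calc ‖collisionIntegrand φ q * ψ q.2.1‖ = |collisionIntegrand φ q| * |ψ q.2.1| := abs_mul _ _
    _ ≤ c ^ 2 * ((1 + energy q.2) * exp (-β * energy q.2)) * (L * (1 + energy q.2)) := by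
        gcongr
        exact abs_collisionIntegrand_le hφ hup q
    _ = c ^ 2 * L * ((1 + energy q.2) ^ 2 * exp (-β * energy q.2)) := by ring
    _ ≤ c ^ 2 * L * (M * exp (-(β / 2) * energy q.2)) :=
        mul_le_mul_of_nonneg_left (hM _ he) (by positivity)
    _ = c ^ 2 * L * M * exp (-(β / 2) * energy q.2) := by ring

theorem exists_abs_collisionOperator_le {β : ℝ} (hβ : 0 < β) :
    ∃ K, 0 ≤ K ∧ ∀ (φ : E → ℝ) (c : ℝ), (∀ v, 0 ≤ φ v) →
      (∀ v, φ v ≤ c * exp (-β * ‖v‖ ^ 2)) →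
      ∀ v, |collisionOperator φ v| ≤ c ^ 2 * K * exp (-(β / 2) * ‖v‖ ^ 2) := by
  obtain ⟨M, hM₀, hM⟩ := exists_one_add_pow_mul_exp_neg_le 1 (half_lt_self hβ)
  let I := ∫ w : E, exp (-(β / 2) * ‖w‖ ^ 2)
  have hI : 0 ≤ I := integral_nonneg fun w ↦ (exp_pos _).le
  refine ⟨M * I * (volume : Measure E).toSphere.real Set.univ,
    mul_nonneg (mul_nonneg hM₀ hI) measureReal_nonneg, fun φ c hφ hup v ↦ ?_⟩
  have integrand_le (ν : sphere (0 : E) 1) (w : E) : ‖collisionIntegrand φ (ν, v, w)‖ ≤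
      c ^ 2 * (M * exp (-(β / 2) * ‖v‖ ^ 2)) * exp (-(β / 2) * ‖w‖ ^ 2) := by
    calc ‖collisionIntegrand φ (ν, v, w)‖
        ≤ c ^ 2 * ((1 + energy (v, w)) ^ 1 * exp (-β * energy (v, w))) := by
          simpa only [pow_one, norm_eq_abs] using abs_collisionIntegrand_le hφ hup (ν, v, w)
      _ ≤ c ^ 2 * (M * exp (-(β / 2) * energy (v, w))) :=
          mul_le_mul_of_nonneg_left (hM _ (energy_nonneg _)) (by positivity)
      _ = _ := by rw [exp_mul_energy]; ring
  have inner_integral_le (ν : sphere (0 : E) 1) : ‖∫ w, collisionIntegrand φ (ν, v, w)‖ ≤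
      c ^ 2 * (M * exp (-(β / 2) * ‖v‖ ^ 2)) * I := by
    rw [← integral_const_mul]
    exact norm_integral_le_of_norm_le ((integrable_exp_neg_mul_sq_norm (half_pos hβ)).const_mul _)
      (.of_forall (integrand_le ν))
  calc |collisionOperator φ v|
      ≤ c ^ 2 * (M * exp (-(β / 2) * ‖v‖ ^ 2)) * I * (volume : Measure E).toSphere.real Set.univ :=
        norm_integral_le_of_norm_le_const (.of_forall inner_integral_le)
    _ = _ := by ring

theorem stronglyMeasurable_collisionOperator {g : E × E → ℝ} (hg : Continuous g) :
    StronglyMeasurable fun p : E × E ↦ collisionOperator (fun w ↦ g (p.1, w)) p.2 := by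
  have := continuous_collisionMap (E := E)
  have integrand_continuous : Continuous fun q : ((E × E) × sphere (0 : E) 1) × E ↦
      collisionIntegrand (fun w ↦ g (q.1.1.1, w)) (q.1.2, q.1.1.2, q.2) := by
    unfold collisionIntegrand
    fun_prop
  exact integrand_continuous.stronglyMeasurable.integral_prod_right'.integral_prod_right'

end Collision

theorem QHS_eq_collisionOperator (f : ℝ × V3 × V3 → ℝ) (t : ℝ) (x v : V3) :
    QHS f t x v = collisionOperator (fun w ↦ f (t, x, w)) v := by
  unfold QHS collisionOperator sphereMeasure
  congr! 4 with ν w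
  rw [collisionIntegrand, collisionMap_apply, real_inner_comm]
  split_ifs with h
  · rw [max_eq_right h]
  · rw [max_eq_left (le_of_not_ge h), zero_mul]

section FreeStreaming

/-- The free streaming `(x, v) ↦ (x + t v, v)` of phase space over time `t`. -/
def freeStream (t : ℝ) : E × E ≃ₜ E × E where
  toFun p := (p.1 + t • p.2, p.2)
  invFun p := (p.1 - t • p.2, p.2)
  left_inv p := by simp
  right_inv p := by simp

theorem freeStream_apply (t : ℝ) (p : E × E) : freeStream t p = (p.1 + t • p.2, p.2) := rfl

theorem energy_le_mul_energy_freeStream (t : ℝ) (p : E × E) :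
    energy p ≤ 2 * (1 + t ^ 2) * energy (freeStream t p) := by
  obtain ⟨x, v⟩ := p
  have norm_le : ‖x‖ ≤ ‖x + t • v‖ + |t| * ‖v‖ := by
    simpa [norm_smul] using norm_sub_le (x + t • v) (t • v)
  have sq_norm_le : ‖x‖ ^ 2 ≤ 2 * (‖x + t • v‖ ^ 2 + t ^ 2 * ‖v‖ ^ 2) := by
    calc ‖x‖ ^ 2 ≤ (‖x + t • v‖ + |t| * ‖v‖) ^ 2 := by gcongr
      _ ≤ 2 * (‖x + t • v‖ ^ 2 + (|t| * ‖v‖) ^ 2) := add_sq_le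
      _ = 2 * (‖x + t • v‖ ^ 2 + t ^ 2 * ‖v‖ ^ 2) := by rw [mul_pow, sq_abs]
  simp only [energy, freeStream_apply]
  linarith [sq_nonneg ‖v‖, mul_nonneg (sq_nonneg t) (sq_nonneg ‖x + t • v‖)]

theorem exp_neg_mul_energy_freeStream_le {κ t T : ℝ} (hκ : 0 ≤ κ) (ht : |t| ≤ T) (p : E × E) :
    exp (-κ * energy (freeStream t p)) ≤ exp (-(κ / (2 * (1 + T ^ 2))) * energy p) := by
  have energy_le : energy p ≤ 2 * (1 + T ^ 2) * energy (freeStream t p) :=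
    (energy_le_mul_energy_freeStream t p).trans <|
      mul_le_mul_of_nonneg_right (by linarith [sq_le_sq' (abs_le.1 ht).1 (abs_le.1 ht).2])
        (energy_nonneg _)
  have := mul_le_mul_of_nonneg_left ((div_le_iff₀' (by positivity)).2 energy_le) hκ
  rw [exp_le_exp, neg_mul, neg_mul, neg_le_neg_iff]
  calc κ / (2 * (1 + T ^ 2)) * energy p = κ * (energy p / (2 * (1 + T ^ 2))) := by ring
    _ ≤ κ * energy (freeStream t p) := this

theorem hasDerivAt_comp_freeStream {f : ℝ × E × E → ℝ} {t : ℝ} {p : E × E}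
    (hf : DifferentiableAt ℝ f (t, freeStream t p)) :
    HasDerivAt (fun s ↦ f (s, freeStream s p))
      (deriv (fun s ↦ f (s, freeStream t p)) t +
        fderiv ℝ (fun y ↦ f (t, y, p.2)) (freeStream t p).1 p.2) t := by
  let y := (freeStream t p).1
  let D := fderiv ℝ f (t, y, p.2)
  have hD : HasFDerivAt f D (t, y, p.2) := hf.hasFDerivAt
  have time_deriv : HasDerivAt (fun s ↦ f (s, y, p.2)) (D (1, 0)) t :=
    hD.comp_hasDerivAt t ((hasDerivAt_id t).prodMk (hasDerivAt_const t (y, p.2)))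
  have space_deriv : HasFDerivAt (fun y ↦ f (t, y, p.2))
      (D.comp ((0 : E →L[ℝ] ℝ).prod ((ContinuousLinearMap.id ℝ E).prod 0))) y :=
    hD.comp y ((hasFDerivAt_const t y).prodMk
      ((hasFDerivAt_id y).prodMk (hasFDerivAt_const p.2 y)))
  have position_deriv : HasDerivAt (fun s : ℝ ↦ p.1 + s • p.2) p.2 t := by
    simpa using ((hasDerivAt_id t).smul_const p.2).const_add p.1
  have stream_deriv : HasDerivAt (fun s ↦ f (s, freeStream s p)) (D (1, p.2, 0)) t :=
    hD.comp_hasDerivAt t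
      ((hasDerivAt_id t).prodMk (position_deriv.prodMk (hasDerivAt_const t p.2)))
  convert stream_deriv using 1
  change deriv (fun s ↦ f (s, y, p.2)) t + fderiv ℝ (fun y ↦ f (t, y, p.2)) y p.2 = _
  rw [time_deriv.deriv, space_deriv.fderiv]
  simp [← map_add]

theorem measurePreserving_freeStream [FiniteDimensional ℝ E] [MeasurableSpace E] [BorelSpace E]
    (t : ℝ) : MeasurePreserving (freeStream (E := E) t) :=
  Measure.measurePreserving_swap.comp <|
    ((MeasurePreserving.id (volume : Measure E)).skew_product
      (g := fun v x ↦ x + t • v) (by fun_prop)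
      (.of_forall fun v ↦ map_add_right_eq_self volume (t • v))).comp
    Measure.measurePreserving_swap

end FreeStreaming

section HFunctional

variable {a b c β : ℝ} {g : E × E → ℝ}
variable [FiniteDimensional ℝ E] [MeasurableSpace E] [BorelSpace E]

/-- The `H`-functional `∫ g (log g - 1) dx dv` of a phase space density `g`. -/
def hFunctional (g : E × E → ℝ) : ℝ := ∫ p, hDensity (g p)

theorem integrable_hDensity (ha : 0 < a) (hβ : 0 < β) (hgc : Continuous g)
    (hg : HasGaussianBounds a b c β g) : Integrable fun p ↦ hDensity (g p) := by
  obtain ⟨C, hC⟩ := exists_abs_hDensity_le (E := E) (b := b) (c := c) ha hβ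
  exact ((integrable_exp_neg_mul_energy (half_pos hβ)).const_mul C).mono'
    (continuous_hDensity.comp hgc).aestronglyMeasurable (.of_forall (hC g hg))

theorem hFunctional_eq_integral_comp_freeStream (g : E × E → ℝ) (t : ℝ) :
    hFunctional g = ∫ p, hDensity (g (freeStream t p)) :=
  ((measurePreserving_freeStream t).integral_comp (freeStream t).measurableEmbedding
    fun p ↦ hDensity (g p)).symm

/-- The rate `Q(g,g) log g` at which collisions produce the `H`-functional of the phase space
density `g`. -/
def hProduction (g : E × E → ℝ) (p : E × E) : ℝ :=
  collisionOperator (fun w ↦ g (p.1, w)) p.2 * log (g p)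

theorem stronglyMeasurable_hProduction (hg : Continuous g) : StronglyMeasurable (hProduction g) :=
  (stronglyMeasurable_collisionOperator hg).mul (by fun_prop)

theorem exists_abs_hProduction_le (ha : 0 < a) (hβ : 0 < β) :
    ∃ C, 0 ≤ C ∧ ∀ g : E × E → ℝ, HasGaussianBounds a b c β g →
      ∀ p, |hProduction g p| ≤ C * exp (-(β / 4) * energy p) := by
  obtain ⟨K, hK₀, hK⟩ := exists_abs_collisionOperator_le (E := E) hβ
  obtain ⟨M, hM₀, hM⟩ :=
    exists_one_add_pow_mul_exp_neg_le 1 (show β / 4 < β / 2 by linarith)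
  let L := |log a| + |log c| + |b| + |β|
  refine ⟨c ^ 2 * K * L * M, by positivity, fun g hg p ↦ ?_⟩
  have hc := (hg.const_pos ha).le
  -- With `β / 4` in place of `β`, the square of the `x`-Gaussian matches the `v`-Gaussian of `hK`.
  have slice_le (v : E) :
      g (p.1, v) ≤ c * exp (-(β / 4) * ‖p.1‖ ^ 2) * exp (-β * ‖v‖ ^ 2) := by
    refine (hg.upper _).trans ?_
    rw [exp_mul_energy, ← mul_assoc]
    gcongr
    linarith
  have collision_le : |collisionOperator (fun w ↦ g (p.1, w)) p.2| ≤
      c ^ 2 * K * exp (-(β / 2) * energy p) := by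
    refine (hK _ _ (fun v ↦ (hg.pos ha _).le) slice_le p.2).trans_eq ?_
    rw [exp_mul_energy, mul_pow, ← exp_nat_mul]
    ring_nf
  calc |hProduction g p|
      = |collisionOperator (fun w ↦ g (p.1, w)) p.2| * |log (g p)| := abs_mul _ _
    _ ≤ c ^ 2 * K * exp (-(β / 2) * energy p) * (L * (1 + energy p)) :=
        mul_le_mul collision_le (hg.abs_log_le ha p) (abs_nonneg _) (by positivity)
    _ = c ^ 2 * K * L * ((1 + energy p) ^ 1 * exp (-(β / 2) * energy p)) := by ring
    _ ≤ c ^ 2 * K * L * (M * exp (-(β / 4) * energy p)) :=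
        mul_le_mul_of_nonneg_left (hM _ (energy_nonneg p)) (by positivity)
    _ = c ^ 2 * K * L * M * exp (-(β / 4) * energy p) := by ring

theorem exists_abs_hProduction_freeStream_le (ha : 0 < a) (hβ : 0 < β) (T : ℝ) :
    ∃ C γ, 0 < γ ∧ ∀ g : E × E → ℝ, HasGaussianBounds a b c β g →
      ∀ t, |t| ≤ T → ∀ p, |hProduction g (freeStream t p)| ≤ C * exp (-γ * energy p) := by
  obtain ⟨C, hC₀, hC⟩ := exists_abs_hProduction_le (E := E) (b := b) (c := c) ha hβ
  refine ⟨C, β / 4 / (2 * (1 + T ^ 2)), by positivity, fun g hg t ht p ↦ ?_⟩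
  exact (hC g hg _).trans
    (mul_le_mul_of_nonneg_left (exp_neg_mul_energy_freeStream_le (by positivity) ht p) hC₀)

theorem integral_hProduction_nonpos (ha : 0 < a) (hβ : 0 < β) (hgc : Continuous g)
    (hg : HasGaussianBounds a b c β g) : ∫ p, hProduction g p ≤ 0 := by
  obtain ⟨C, -, hC⟩ := exists_abs_hProduction_le (E := E) (b := b) (c := c) ha hβ
  have hint : Integrable (hProduction g) :=
    ((integrable_exp_neg_mul_energy (by positivity)).const_mul C).mono'
      (stronglyMeasurable_hProduction hgc).aestronglyMeasurable (.of_forall (hC g hg))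
  rw [Measure.volume_eq_prod, integral_prod _ hint]
  refine integral_nonpos fun x ↦ ?_
  have slice_le (v : E) : g (x, v) ≤ c * exp (-β * ‖x‖ ^ 2) * exp (-β * ‖v‖ ^ 2) := by
    rw [mul_assoc, ← exp_mul_energy (-β) (x, v)]
    exact hg.upper (x, v)
  have slice_abs_log_le (v : E) : |log (g (x, v))| ≤
      (|log a| + |log c| + |b| + |β|) * (1 + ‖x‖ ^ 2) * (1 + ‖v‖ ^ 2) := by
    refine (hg.abs_log_le ha _).trans ?_
    rw [mul_assoc]
    gcongr
    exact one_add_energy_le (x, v)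
  have slice_log_continuous : Continuous fun v ↦ log (g (x, v)) :=
    (by fun_prop : Continuous fun v ↦ g (x, v)).log fun v ↦ (hg.pos ha _).ne'
  exact integral_collisionOperator_mul_log_nonpos (fun v ↦ hg.pos ha _)
    (integrable_collisionIntegrand_mul hβ (by fun_prop) (fun v ↦ (hg.pos ha _).le) slice_le
      slice_log_continuous slice_abs_log_le)

/-- A classical solution on `[0,T]` of the Boltzmann equation `∂ₜf + v·∇ₓf = Q(f,f)`. The time `t`
and the phase space point `(x, v)` form a single argument `(t, x, v)`. -/
structure IsBoltzmannSolution (T : ℝ) (f : ℝ × E × E → ℝ) : Prop where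
  continuousOn : ContinuousOn f (Set.Icc 0 T ×ˢ Set.univ)
  differentiableOn : DifferentiableOn ℝ f (Set.Ioo 0 T ×ˢ Set.univ)
  equation : ∀ t ∈ Set.Ioo 0 T, ∀ x v : E,
    deriv (fun s ↦ f (s, x, v)) t + fderiv ℝ (fun y ↦ f (t, y, v)) x v =
      collisionOperator (fun w ↦ f (t, x, w)) v

variable {T : ℝ} {f : ℝ × E × E → ℝ}

namespace IsBoltzmannSolution

theorem of_differentiableOn (hf : DifferentiableOn ℝ f (Set.Icc 0 T ×ˢ Set.univ))
    (equation : ∀ t ∈ Set.Ioo 0 T, ∀ x v : E,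
      deriv (fun s ↦ f (s, x, v)) t + fderiv ℝ (fun y ↦ f (t, y, v)) x v =
        collisionOperator (fun w ↦ f (t, x, w)) v) :
    IsBoltzmannSolution T f :=
  ⟨hf.continuousOn, hf.mono (Set.prod_mono_left Set.Ioo_subset_Icc_self), equation⟩

theorem continuous_slice (hf : IsBoltzmannSolution T f) {t : ℝ} (ht : t ∈ Set.Icc 0 T) :
    Continuous fun p ↦ f (t, p) :=
  hf.continuousOn.comp_continuous (by fun_prop) fun _ ↦ ⟨ht, trivial⟩

theorem hasDerivAt_hDensity_comp_freeStream (hf : IsBoltzmannSolution T f) {t : ℝ}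
    (ht : t ∈ Set.Ioo 0 T) {p : E × E} (hp : f (t, freeStream t p) ≠ 0) :
    HasDerivAt (fun s ↦ hDensity (f (s, freeStream s p)))
      (hProduction (fun p ↦ f (t, p)) (freeStream t p)) t := by
  have differentiableAt : DifferentiableAt ℝ f (t, freeStream t p) :=
    hf.differentiableOn.differentiableAt
      ((isOpen_Ioo.prod isOpen_univ).mem_nhds ⟨ht, trivial⟩)
  refine ((hasDerivAt_hDensity hp).comp t
    (hasDerivAt_comp_freeStream differentiableAt)).congr_deriv ?_
  rw [mul_comm]
  exact congrArg (· * log (f (t, freeStream t p))) (hf.equation t ht (freeStream t p).1 p.2)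

theorem continuousOn_hFunctional (hf : IsBoltzmannSolution T f) (ha : 0 < a) (hβ : 0 < β)
    (hbounds : ∀ t ∈ Set.Icc 0 T, HasGaussianBounds a b c β fun p ↦ f (t, p)) :
    ContinuousOn (fun t ↦ hFunctional fun p ↦ f (t, p)) (Set.Icc 0 T) := by
  obtain ⟨C, hC⟩ := exists_abs_hDensity_le (E := E) (b := b) (c := c) ha hβ
  refine continuousOn_of_dominated
    (fun t ht ↦ (continuous_hDensity.comp (hf.continuous_slice ht)).aestronglyMeasurable)
    (fun t ht ↦ .of_forall (hC _ (hbounds t ht)))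
    ((integrable_exp_neg_mul_energy (half_pos hβ)).const_mul C) (.of_forall fun p ↦ ?_)
  exact continuous_hDensity.comp_continuousOn
    (hf.continuousOn.comp (by fun_prop) fun t ht ↦ ⟨ht, trivial⟩)

theorem hasDerivAt_hFunctional (hf : IsBoltzmannSolution T f) (ha : 0 < a) (hβ : 0 < β)
    (hbounds : ∀ t ∈ Set.Icc 0 T, HasGaussianBounds a b c β fun p ↦ f (t, p)) {t : ℝ}
    (ht : t ∈ Set.Ioo 0 T) :
    HasDerivAt (fun s ↦ hFunctional fun p ↦ f (s, p))
      (∫ p, hProduction (fun p ↦ f (t, p)) p) t := by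
  obtain ⟨C, γ, hγ, hC⟩ :=
    exists_abs_hProduction_freeStream_le (E := E) (b := b) (c := c) ha hβ T
  have mem_Icc {s : ℝ} (hs : s ∈ Set.Ioo 0 T) := Set.Ioo_subset_Icc_self hs
  have production_le (p : E × E) : ∀ s ∈ Set.Ioo 0 T,
      ‖hProduction (fun p ↦ f (s, p)) (freeStream s p)‖ ≤ C * exp (-γ * energy p) := fun s hs ↦
    hC _ (hbounds s (mem_Icc hs)) s ((abs_of_pos hs.1).trans_le hs.2.le) p
  have streamed_continuous {s : ℝ} (hs : s ∈ Set.Ioo 0 T) :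
      Continuous fun p ↦ hDensity (f (s, freeStream s p)) :=
    continuous_hDensity.comp ((hf.continuous_slice (mem_Icc hs)).comp (freeStream s).continuous)
  have streamed_integrable : Integrable fun p ↦ hDensity (f (t, freeStream t p)) :=
    (measurePreserving_freeStream t).integrable_comp_of_integrable
      (integrable_hDensity ha hβ (hf.continuous_slice (mem_Icc ht)) (hbounds t (mem_Icc ht)))
  have streamed_deriv := (hasDerivAt_integral_of_dominated_loc_of_deriv_le (Ioo_mem_nhds ht.1 ht.2)
    (Filter.eventually_of_mem (Ioo_mem_nhds ht.1 ht.2) fun s hs ↦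
      (streamed_continuous hs).aestronglyMeasurable)
    streamed_integrable
    ((stronglyMeasurable_hProduction (hf.continuous_slice (mem_Icc ht))).comp_measurable
      (freeStream t).measurable).aestronglyMeasurable
    (.of_forall production_le) ((integrable_exp_neg_mul_energy hγ).const_mul C)
    (.of_forall fun p s hs ↦ hf.hasDerivAt_hDensity_comp_freeStream hs
      ((hbounds s (mem_Icc hs)).pos ha _).ne')).2
  exact (streamed_deriv.congr_deriv ((measurePreserving_freeStream t).integral_comp
      (freeStream t).measurableEmbedding _)).congr_of_eventuallyEq
    (.of_forall fun s ↦ hFunctional_eq_integral_comp_freeStream _ s)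

end IsBoltzmannSolution

theorem h_theorem_general (hf : IsBoltzmannSolution T f) (ha : 0 < a) (hβ : 0 < β)
    (hbounds : ∀ t ∈ Set.Icc 0 T, HasGaussianBounds a b c β fun p ↦ f (t, p)) :
    (∀ t ∈ Set.Icc 0 T, Integrable fun p ↦ hDensity (f (t, p))) ∧
      AntitoneOn (fun t ↦ hFunctional fun p ↦ f (t, p)) (Set.Icc 0 T) := by
  refine ⟨fun t ht ↦ integrable_hDensity ha hβ (hf.continuous_slice ht) (hbounds t ht),
    antitoneOn_of_hasDerivWithinAt_nonpos (convex_Icc 0 T)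
      (hf.continuousOn_hFunctional ha hβ hbounds)
      (f' := fun t ↦ ∫ p, hProduction (fun p ↦ f (t, p)) p) ?_ ?_⟩ <;>
    rw [interior_Icc] <;> intro t ht
  · exact (hf.hasDerivAt_hFunctional ha hβ hbounds ht).hasDerivWithinAt
  · have ht' := Set.Ioo_subset_Icc_self ht
    exact integral_hProduction_nonpos ha hβ (hf.continuous_slice ht') (hbounds t ht')

end HFunctional

/-- H-Theorem for the hard-sphere Boltzmann equation: if `f` is a strictly positive
`C¹` solution of `∂_t f + v·∇_x f = Q(f,f)` sandwiched between Gaussians, with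
Gaussian-bounded derivatives, then the `H`-functional
`H(f(t)) = ∫ f(t,x,v)[log f(t,x,v) − 1] dx dv` is well defined and nonincreasing on
`[0,T]`; in particular `H(f(t)) ≤ H(f(0))`. -/
theorem h_theorem (T : ℝ) (hT : 0 < T)
    (f : ℝ × V3 × V3 → ℝ)
    (hreg : ContDiffOn ℝ 1 f (Set.Icc 0 T ×ˢ (Set.univ : Set (V3 × V3))))
    (hpos : ∀ t ∈ Set.Icc (0 : ℝ) T, ∀ x v : V3, 0 < f (t, x, v))
    (c₁ c₂ β₁ β₂ : ℝ) (hc₁ : 0 < c₁) (hc₁₂ : c₁ ≤ c₂) (hβ₂ : 0 < β₂) (hβ₁₂ : β₂ ≤ β₁)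
    (hlow : ∀ t ∈ Set.Icc (0 : ℝ) T, ∀ x v : V3,
      c₁ * Real.exp (-β₁ * (‖x‖ ^ 2 + ‖v‖ ^ 2)) ≤ f (t, x, v))
    (hup : ∀ t ∈ Set.Icc (0 : ℝ) T, ∀ x v : V3,
      f (t, x, v) ≤ c₂ * Real.exp (-β₂ * (‖x‖ ^ 2 + ‖v‖ ^ 2)))
    (hder : ∀ t ∈ Set.Icc (0 : ℝ) T, ∀ x v : V3,
      |deriv (fun s => f (s, x, v)) t| + ‖fderiv ℝ (fun y => f (t, y, v)) x‖ +
          ‖fderiv ℝ (fun w => f (t, x, w)) v‖ ≤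
        c₂ * Real.exp (-β₂ * (‖x‖ ^ 2 + ‖v‖ ^ 2)))
    (hPDE : ∀ t ∈ Set.Ioo (0 : ℝ) T, ∀ x v : V3,
      deriv (fun s => f (s, x, v)) t + fderiv ℝ (fun y => f (t, y, v)) x v =
        QHS f t x v)
    (H : ℝ → ℝ)
    (hH : ∀ t, H t = ∫ p : V3 × V3, f (t, p.1, p.2) * (Real.log (f (t, p.1, p.2)) - 1)) :
    (∀ t ∈ Set.Icc (0 : ℝ) T,
      Integrable (fun p : V3 × V3 => f (t, p.1, p.2) * (Real.log (f (t, p.1, p.2)) - 1))) ∧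
    AntitoneOn H (Set.Icc 0 T) ∧
    ∀ t ∈ Set.Icc (0 : ℝ) T, H t ≤ H 0 := by
  obtain ⟨integrable, antitone⟩ := h_theorem_general
    (.of_differentiableOn (hreg.differentiableOn one_ne_zero) fun t ht x v ↦
      (hPDE t ht x v).trans (QHS_eq_collisionOperator f t x v))
    hc₁ hβ₂ fun t ht ↦ ⟨fun p ↦ hlow t ht p.1 p.2, fun p ↦ hup t ht p.1 p.2⟩
  obtain rfl : H = fun t ↦ hFunctional fun p ↦ f (t, p) := funext hH
  exact ⟨integrable, antitone, fun t ht ↦ antitone ⟨le_rfl, hT.le⟩ ht ht.1⟩
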